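/- arXiv:1301.0147 — 3 statements merged into one kernel-verified Lean document; each statement's English description precedes it below -/
import Mathlib

section
/- Let T > 0, let f : [0,T] → ℝ^d be a bounded measurable function with ‖f(s)‖ ≤ M for all s ∈ [0,T], and let x ∈ ℝ^d. If for some ε with 0 < ε < T one has ∫_0^T ‖x + ∫_0^t f(s) ds‖² dt ≤ ε³, then sup_{t ∈ [0,T]} ‖∫_0^t f(s) ds‖ ≤ 2(1 + M)ε. -/
open MeasureTheory

/-- If the integral of `‖g‖ ^ 2` over an interval of length `ε` is at most `ε ^ 3`, then
`‖g s‖ ≤ ε` at some point `s` of the interval. -/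
theorem exists_norm_le_of_integral_norm_sq_le {E : Type*} [NormedAddCommGroup E] {g : ℝ → E}
    {a ε : ℝ} (hε : 0 < ε) (hg : ContinuousOn g (Set.Icc a (a + ε)))
    (h : ∫ t in a..(a + ε), ‖g t‖ ^ 2 ≤ ε ^ 3) :
    ∃ s ∈ Set.Icc a (a + ε), ‖g s‖ ≤ ε := by
  have hle : a ≤ a + ε := by linarith
  obtain ⟨s, hs, hmin⟩ := isCompact_Icc.exists_isMinOn (Set.nonempty_Icc.2 hle) hg.norm
  refine ⟨s, hs, ?_⟩
  have hint : IntervalIntegrable (fun t => ‖g t‖ ^ 2) volume a (a + ε) :=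
    (hg.norm.pow 2).intervalIntegrable_of_Icc hle
  have hlow : ∫ _ in a..(a + ε), ‖g s‖ ^ 2 ≤ ∫ t in a..(a + ε), ‖g t‖ ^ 2 :=
    intervalIntegral.integral_mono_on hle intervalIntegrable_const hint fun t ht =>
      pow_le_pow_left₀ (norm_nonneg _) (hmin ht) 2
  rw [intervalIntegral.integral_const, add_sub_cancel_left, smul_eq_mul] at hlow
  refine le_of_sq_le_sq ?_ hε.le
  refine le_of_mul_le_mul_left ?_ hε
  calc ε * ‖g s‖ ^ 2 ≤ ε ^ 3 := hlow.trans h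
    _ = ε * ε ^ 2 := by ring

/-- A `K`-Lipschitz function on `[0, T]` with `∫ ‖g‖ ^ 2 ≤ ε ^ 3` and `0 < ε ≤ T` is bounded by
`(1 + K) * ε`. -/
theorem LipschitzOnWith.norm_le_of_integral_norm_sq_le {E : Type*} [NormedAddCommGroup E]
    {g : ℝ → E} {K : NNReal} {T ε : ℝ} (hg : LipschitzOnWith K g (Set.Icc 0 T))
    (hε : 0 < ε) (hεT : ε ≤ T) (h : ∫ t in (0 : ℝ)..T, ‖g t‖ ^ 2 ≤ ε ^ 3)
    {t : ℝ} (ht : t ∈ Set.Icc 0 T) : ‖g t‖ ≤ (1 + K) * ε := by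
  obtain ⟨a, ha, haT, hat, hta⟩ : ∃ a, 0 ≤ a ∧ a + ε ≤ T ∧ a ≤ t ∧ t ≤ a + ε := by
    rcases le_total t (T - ε) with h' | h'
    · exact ⟨t, ht.1, by linarith, le_rfl, by linarith⟩
    · exact ⟨T - ε, by linarith, by linarith, h', by linarith [ht.2]⟩
  have hsub : Set.Icc a (a + ε) ⊆ Set.Icc 0 T := Set.Icc_subset_Icc ha haT
  have hint : IntervalIntegrable (fun t => ‖g t‖ ^ 2) volume 0 T :=
    (hg.continuousOn.norm.pow 2).intervalIntegrable_of_Icc (hε.le.trans hεT)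
  have hmono : ∫ t in a..(a + ε), ‖g t‖ ^ 2 ≤ ∫ t in (0 : ℝ)..T, ‖g t‖ ^ 2 :=
    intervalIntegral.integral_mono_interval ha (by linarith) haT
      (Filter.Eventually.of_forall fun _ => sq_nonneg _) hint
  obtain ⟨s, hs, hgs⟩ := exists_norm_le_of_integral_norm_sq_le hε
    (hg.continuousOn.mono hsub) (hmono.trans h)
  have hdist : ‖g t - g s‖ ≤ K * ε := by
    rw [← dist_eq_norm]
    refine (hg.dist_le_mul t ht s (hsub hs)).trans ?_
    refine mul_le_mul_of_nonneg_left ?_ K.coe_nonneg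
    rw [Real.dist_eq, abs_le]
    constructor <;> linarith [hs.1, hs.2]
  linarith [norm_le_norm_add_norm_sub' (g t) (g s)]

/-- The primitive of a measurable function bounded by `K` on `[0, T]` is `K`-Lipschitz there. -/
theorem lipschitzOnWith_integral_of_norm_le {E : Type*} [NormedAddCommGroup E] [NormedSpace ℝ E]
    {f : ℝ → E} {K : NNReal} {T : ℝ} (hf : AEStronglyMeasurable f)
    (hbdd : ∀ s ∈ Set.Icc 0 T, ‖f s‖ ≤ K) :
    LipschitzOnWith K (fun t => ∫ s in (0 : ℝ)..t, f s) (Set.Icc 0 T) := by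
  have hint : ∀ t ∈ Set.Icc 0 T, IntervalIntegrable f volume 0 t := fun t ht => by
    rw [intervalIntegrable_iff_integrableOn_Ioc_of_le ht.1]
    refine Measure.integrableOn_of_bounded (M := K) (by simp) hf ?_
    filter_upwards [ae_restrict_mem measurableSet_Ioc] with s hs
    exact hbdd s ⟨hs.1.le, hs.2.trans ht.2⟩
  refine LipschitzOnWith.of_dist_le_mul fun t ht s hs => ?_
  rw [dist_eq_norm, intervalIntegral.integral_interval_sub_left (hint t ht) (hint s hs),
    Real.dist_eq]
  refine intervalIntegral.norm_integral_le_of_norm_le_const fun r hr => hbdd r ?_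
  exact Set.uIcc_subset_Icc hs ht (Set.uIoc_subset_uIcc hr)

/-- Lemma 2.3 of the paper (deterministic ingredient of Norris' lemma):
if `∫_0^T ‖x + ∫_0^t f(s) ds‖² dt ≤ ε³` for a bounded measurable `f` with `‖f‖ ≤ M`
and `0 < ε < T`, then `sup_{t ∈ [0,T]} ‖∫_0^t f(s) ds‖ ≤ 2(1+M)ε`. -/
theorem stmt_0 {d : ℕ} (T M ε : ℝ) (hT : 0 < T)
    (f : ℝ → EuclideanSpace ℝ (Fin d)) (hf_meas : Measurable f)
    (hf_bdd : ∀ s ∈ Set.Icc (0 : ℝ) T, ‖f s‖ ≤ M)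
    (x : EuclideanSpace ℝ (Fin d))
    (hε : 0 < ε) (hεT : ε < T)
    (h : (∫ t in (0:ℝ)..T, ‖x + ∫ s in (0:ℝ)..t, f s‖ ^ 2) ≤ ε ^ 3) :
    ∀ t ∈ Set.Icc (0 : ℝ) T, ‖∫ s in (0:ℝ)..t, f s‖ ≤ 2 * (1 + M) * ε := by
  intro t ht
  have hM : 0 ≤ M := (norm_nonneg _).trans (hf_bdd 0 ⟨le_rfl, hT.le⟩)
  lift M to NNReal using hM
  have hlip : LipschitzOnWith M (fun t => x + ∫ s in (0 : ℝ)..t, f s) (Set.Icc 0 T) := by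
    simpa using ((LipschitzWith.const x).lipschitzOnWith (s := Set.Icc 0 T)).add
      (lipschitzOnWith_integral_of_norm_le hf_meas.aestronglyMeasurable hf_bdd)
  have hgt := hlip.norm_le_of_integral_norm_sq_le hε hεT.le h ht
  have hx := hlip.norm_le_of_integral_norm_sq_le hε hεT.le h ⟨le_rfl, hT.le⟩
  simp only [intervalIntegral.integral_same, add_zero] at hx
  have htri := norm_sub_le (x + ∫ s in (0 : ℝ)..t, f s) x
  rw [add_sub_cancel_left] at htri
  linarith
end

section
/- Let ℓ : [0,∞) → [0,∞) be nondecreasing and right-continuous with ℓ(0) = 0, with generalized inverse ℓ⁻¹(t) := inf{s ≥ 0 : ℓ(s) > t} ∈ [0,∞] (inf ∅ = ∞). Let g : [0,∞) → ℝ be locally integrable and set h(t) := ∫_0^t g(s) ds. Then for all 0 ≤ a < b ≤ T one has ∫_0^{ℓ(T)} 1_{(a,b]}(ℓ⁻¹(s)) g(s) ds = h(ℓ(b)) − h(ℓ(a)). -/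
open MeasureTheory
open scoped ENNReal

/-- The generalized (right-continuous) inverse `ℓ⁻¹(t) = inf {s ≥ 0 : ℓ(s) > t}`,
with values in `[0,∞]` and the convention `inf ∅ = ∞`. -/
noncomputable def linv (ℓ : ℝ → ℝ) (t : ℝ) : ℝ≥0∞ :=
  sInf {x : ℝ≥0∞ | ∃ s : ℝ, 0 ≤ s ∧ x = ENNReal.ofReal s ∧ t < ℓ s}

/-- Off the level `t = ℓ c`, the sublevel sets of the generalized inverse are those of `ℓ`. -/
theorem linv_le_ofReal_iff {ℓ : ℝ → ℝ} (hmono : MonotoneOn ℓ (Set.Ici 0)) {c t : ℝ} (hc : 0 ≤ c)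
    (hrc : ContinuousWithinAt ℓ (Set.Ici c) c) (ht : t ≠ ℓ c) :
    linv ℓ t ≤ ENNReal.ofReal c ↔ t < ℓ c := by
  refine ⟨fun hle => ?_, fun hlt => sInf_le ⟨c, hc, rfl, hlt⟩⟩
  by_contra hnot
  have hlt : ℓ c < t := lt_of_le_of_ne (not_lt.mp hnot) ht.symm
  obtain ⟨d, hcd, hd⟩ := mem_nhdsGE_iff_exists_Ico_subset.mp (hrc.eventually (gt_mem_nhds hlt))
  have hcd' : c < d := hcd
  have hdle : ENNReal.ofReal d ≤ linv ℓ t := by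
    refine le_sInf ?_
    rintro _ ⟨s, hs, rfl, hts⟩
    refine ENNReal.ofReal_le_ofReal (not_lt.mp fun hsd => ?_)
    rcases le_total c s with hcs | hsc
    · exact lt_asymm hts (hd ⟨hcs, hsd⟩)
    · exact absurd (hmono hs hc hsc) (not_le.mpr (hlt.trans hts))
  exact absurd (hdle.trans hle)
    (not_le.mpr ((ENNReal.ofReal_lt_ofReal_iff (hc.trans_lt hcd')).mpr hcd'))

/-- Lemma 4.3 of the paper for an indicator integrand: for `h(t) = ∫_0^t g(s) ds`
with `g` locally integrable, a nondecreasing right-continuous `ℓ : [0,∞) → [0,∞)`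
with `ℓ(0) = 0`, and `0 ≤ a < b ≤ T`,
`∫_0^{ℓ(T)} 1_{(a,b]}(ℓ⁻¹(s)) g(s) ds = h(ℓ(b)) - h(ℓ(a))`. -/
theorem stmt_3 (ℓ : ℝ → ℝ)
    (hmono : MonotoneOn ℓ (Set.Ici 0))
    (hrc : ∀ a : ℝ, 0 ≤ a → ContinuousWithinAt ℓ (Set.Ici a) a)
    (hℓ0 : ℓ 0 = 0) (hnonneg : ∀ t : ℝ, 0 ≤ t → 0 ≤ ℓ t)
    (g : ℝ → ℝ) (hg : LocallyIntegrable g)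
    (h : ℝ → ℝ) (hh : ∀ t, h t = ∫ s in (0:ℝ)..t, g s)
    (a b T : ℝ) (ha : 0 ≤ a) (hab : a < b) (hbT : b ≤ T) :
    (∫ s in (0:ℝ)..(ℓ T),
        {s : ℝ | ENNReal.ofReal a < linv ℓ s ∧ linv ℓ s ≤ ENNReal.ofReal b}.indicator g s)
      = h (ℓ b) - h (ℓ a) := by
  have hb : 0 ≤ b := ha.trans hab.le
  have hlab : ℓ a ≤ ℓ b := hmono ha hb hab.le
  have hlbT : ℓ b ≤ ℓ T := hmono hb (hb.trans hbT) hbT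
  have hint : ∀ x y : ℝ, IntervalIntegrable g volume x y := fun x y =>
    (hg.integrableOn_isCompact isCompact_uIcc).intervalIntegrable
  have hae : ∀ᵐ s : ℝ,
      {s : ℝ | ENNReal.ofReal a < linv ℓ s ∧ linv ℓ s ≤ ENNReal.ofReal b}.indicator g s
        = (Set.Ioc (ℓ a) (ℓ b)).indicator g s := by
    filter_upwards [Measure.ae_ne volume (ℓ a), Measure.ae_ne volume (ℓ b)] with s hsa hsb
    have hmem : s ∈ {s : ℝ | ENNReal.ofReal a < linv ℓ s ∧ linv ℓ s ≤ ENNReal.ofReal b} ↔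
        s ∈ Set.Ioc (ℓ a) (ℓ b) := by
      rw [Set.mem_ofPred_eq, Set.mem_Ioc, ← not_le, linv_le_ofReal_iff hmono ha (hrc a ha) hsa,
        linv_le_ofReal_iff hmono hb (hrc b hb) hsb, not_lt, hsa.symm.le_iff_lt, hsb.le_iff_lt]
    by_cases hs : s ∈ Set.Ioc (ℓ a) (ℓ b)
    · rw [Set.indicator_of_mem hs, Set.indicator_of_mem (hmem.mpr hs)]
    · rw [Set.indicator_of_notMem hs, Set.indicator_of_notMem (mt hmem.mp hs)]
  rw [intervalIntegral.integral_congr_ae (hae.mono fun s hs _ => hs), hh, hh,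
    intervalIntegral.integral_interval_sub_left (hint _ _) (hint _ _),
    intervalIntegral.integral_of_le (hnonneg T (hb.trans hbT)),
    setIntegral_indicator measurableSet_Ioc,
    Set.inter_eq_right.mpr (Set.Ioc_subset_Ioc (hnonneg a ha) hlbT),
    intervalIntegral.integral_of_le hlab]
end

section
/- Let ℓ : [0,∞) → [0,∞) be nondecreasing and right-continuous with ℓ(0) = 0, with generalized inverse ℓ⁻¹(t) := inf{s ≥ 0 : ℓ(s) > t} ∈ [0,∞] (inf ∅ = ∞), and let Λ be the associated Lebesgue–Stieltjes measure, characterized by Λ((a,b]) = ℓ(b) − ℓ(a) for 0 ≤ a < b. Then for every bounded Borel function F : (0,∞) → ℝ (extended by 0 at ∞) and every t ≥ 0, ∫_0^{ℓ(t)} F(ℓ⁻¹(s)) ds = ∫_{(0,t]} F dΛ. -/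
open MeasureTheory
open scoped ENNReal

theorem linv_mono (ℓ : ℝ → ℝ) : Monotone (linv ℓ) := by
  intro a b hab
  refine sInf_le_sInf ?_
  rintro x ⟨s, hs, hx, hlt⟩
  exact ⟨s, hs, hx, hab.trans_lt hlt⟩

theorem linv_le_of_lt {ℓ : ℝ → ℝ} {r s : ℝ} (hr : 0 ≤ r) (h : s < ℓ r) :
    linv ℓ s ≤ ENNReal.ofReal r :=
  sInf_le ⟨r, hr, rfl, h⟩

theorem le_of_linv_le {ℓ : ℝ → ℝ} (hmono : MonotoneOn ℓ (Set.Ici 0)) {r s : ℝ} (hr : 0 ≤ r)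
    (hrc : ContinuousWithinAt ℓ (Set.Ici r) r) (h : linv ℓ s ≤ ENNReal.ofReal r) :
    s ≤ ℓ r := by
  have hlim : Filter.Tendsto ℓ (nhdsWithin r (Set.Ioi r)) (nhds (ℓ r)) :=
    hrc.mono Set.Ioi_subset_Ici_self
  refine ge_of_tendsto hlim ?_
  filter_upwards [self_mem_nhdsWithin] with u hu
  have hu' : r < u := hu
  have hlt : linv ℓ s < ENNReal.ofReal u :=
    h.trans_lt ((ENNReal.ofReal_lt_ofReal_iff (hr.trans_lt hu')).2 hu')
  obtain ⟨_, ⟨v, hv, rfl, hsv⟩, hvu⟩ := sInf_lt_iff.1 hlt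
  have hvu' : v < u := (ENNReal.ofReal_lt_ofReal_iff (hr.trans_lt hu')).1 hvu
  exact hsv.le.trans (hmono hv (hr.trans hu'.le) hvu'.le)

/-- Up to the endpoint `ℓ (min r t)`, the points of `(0, ℓ t]` with `ℓ⁻¹ ≤ r` form the interval
`(0, ℓ (min r t))`. -/
theorem volume_linv_preimage_Iic {ℓ : ℝ → ℝ} (hmono : MonotoneOn ℓ (Set.Ici 0)) {r t : ℝ}
    (hr : 0 ≤ r) (ht : 0 ≤ t) (hrc : ContinuousWithinAt ℓ (Set.Ici r) r) :
    volume (linv ℓ ⁻¹' Set.Iic (ENNReal.ofReal r) ∩ Set.Ioc 0 (ℓ t))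
      = ENNReal.ofReal (ℓ (min r t)) := by
  have hmin : ℓ (min r t) = min (ℓ r) (ℓ t) := hmono.map_min hr ht
  apply le_antisymm
  · calc _ ≤ volume (Set.Ioc 0 (ℓ (min r t))) := by
          refine measure_mono ?_
          rintro s ⟨hs, hs0, hst⟩
          exact ⟨hs0, hmin ▸ le_min (le_of_linv_le hmono hr hrc hs) hst⟩
      _ = _ := by simp
  · calc ENNReal.ofReal (ℓ (min r t)) = volume (Set.Ioo 0 (ℓ (min r t))) := by simp
      _ ≤ _ := by
          refine measure_mono ?_
          rintro s ⟨hs0, hs⟩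
          rw [hmin, lt_min_iff] at hs
          exact ⟨linv_le_of_lt hr hs.1, hs0, hs.2.le⟩

/-- The image of Lebesgue measure on `(0, ℓ t]` under `ℓ⁻¹` is the Lebesgue–Stieltjes measure of `ℓ`
on `(0, t]`. -/
theorem map_linv_volume_restrict {ℓ : ℝ → ℝ} (hmono : MonotoneOn ℓ (Set.Ici 0))
    (hrc : ∀ a : ℝ, 0 ≤ a → ContinuousWithinAt ℓ (Set.Ici a) a) (hℓ0 : ℓ 0 = 0)
    {Λ : Measure ℝ}
    (hΛ : ∀ a b : ℝ, 0 ≤ a → a < b → Λ (Set.Ioc a b) = ENNReal.ofReal (ℓ b - ℓ a))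
    {t : ℝ} (ht : 0 ≤ t) :
    (volume.restrict (Set.Ioc 0 (ℓ t))).map (linv ℓ)
      = (Λ.restrict (Set.Ioc 0 t)).map ENNReal.ofReal := by
  have hΛ0 : ∀ b, 0 ≤ b → Λ (Set.Ioc 0 b) = ENNReal.ofReal (ℓ b) := by
    intro b hb
    rcases hb.eq_or_lt with rfl | hb
    · simp [hℓ0]
    · simpa [hℓ0] using hΛ 0 b le_rfl hb
  refine Measure.ext_of_Iic _ _ fun x => ?_
  rw [Measure.map_apply (linv_mono ℓ).measurable measurableSet_Iic,
    Measure.map_apply ENNReal.measurable_ofReal measurableSet_Iic,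
    Measure.restrict_apply ((linv_mono ℓ).measurable measurableSet_Iic),
    Measure.restrict_apply (ENNReal.measurable_ofReal measurableSet_Iic)]
  rcases eq_or_ne x ⊤ with rfl | hx
  · simp [hΛ0 t ht]
  obtain ⟨r, hr, rfl⟩ : ∃ r : ℝ, 0 ≤ r ∧ ENNReal.ofReal r = x :=
    ⟨x.toReal, ENNReal.toReal_nonneg, ENNReal.ofReal_toReal hx⟩
  have hset : ENNReal.ofReal ⁻¹' Set.Iic (ENNReal.ofReal r) ∩ Set.Ioc 0 t
      = Set.Ioc 0 (min r t) := by
    ext s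
    simp only [Set.mem_inter_iff, Set.mem_preimage, Set.mem_Iic, Set.mem_Ioc, le_min_iff,
      ENNReal.ofReal_le_ofReal_iff hr]
    tauto
  rw [hset, hΛ0 _ (le_min hr ht), volume_linv_preimage_Iic hmono hr ht (hrc r hr)]

/-- Measure-theoretic change-of-variables formula (Lemma 4.3/4.4 of the paper):
if `Λ` is the Lebesgue–Stieltjes measure of a nondecreasing right-continuous
`ℓ : [0,∞) → [0,∞)` with `ℓ(0) = 0`, i.e. `Λ((a,b]) = ℓ(b) - ℓ(a)` for `0 ≤ a < b`,
then for every bounded Borel `F` (extended by `0` at `∞`) and every `t ≥ 0`,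
`∫_0^{ℓ(t)} F(ℓ⁻¹(s)) ds = ∫_{(0,t]} F dΛ`. -/
theorem stmt_4 (ℓ : ℝ → ℝ)
    (hmono : MonotoneOn ℓ (Set.Ici 0))
    (hrc : ∀ a : ℝ, 0 ≤ a → ContinuousWithinAt ℓ (Set.Ici a) a)
    (hℓ0 : ℓ 0 = 0) (hnonneg : ∀ t : ℝ, 0 ≤ t → 0 ≤ ℓ t)
    (Λ : Measure ℝ)
    (hΛ : ∀ a b : ℝ, 0 ≤ a → a < b → Λ (Set.Ioc a b) = ENNReal.ofReal (ℓ b - ℓ a))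
    (F : ℝ≥0∞ → ℝ) (hFmeas : Measurable F) (hFbdd : ∃ C, ∀ x, |F x| ≤ C)
    (hFtop : F ⊤ = 0)
    (t : ℝ) (ht : 0 ≤ t) :
    (∫ s in (0:ℝ)..(ℓ t), F (linv ℓ s))
      = ∫ s in Set.Ioc (0:ℝ) t, F (ENNReal.ofReal s) ∂Λ := by
  rw [intervalIntegral.integral_of_le (hnonneg t ht),
    ← integral_map (linv_mono ℓ).measurable.aemeasurable hFmeas.aestronglyMeasurable,
    ← integral_map ENNReal.measurable_ofReal.aemeasurable hFmeas.aestronglyMeasurable,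
    map_linv_volume_restrict hmono hrc hℓ0 hΛ ht]
end
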